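/- (Variance of the random scaling factor M_n.) Let n > s + 3, let X_S be an n×s random matrix whose rows are i.i.d. N(0, Σ_SS) with Σ_SS ∈ ℝ^{s×s} positive definite, and let W ∼ N(0, σ² I_n) be independent of X_S. Fix λ_n > 0 and b ∈ {−1,1}^s, and set M_n = λ_n² b^T (X_S^T X_S)^{-1} b + (1/n²) W^T [I_n − X_S (X_S^T X_S)^{-1} X_S^T] W. Then Var(M_n) = 2 (n − s) σ⁴ / n⁴ + ( λ_n⁴ [ b^T (Σ_SS)^{-1} b ]² / ((n − s − 1)(n − s − 3)) ) · { 1/(n − s) + (n − s − 1)/(n − s) − (n − s − 3)/(n − s − 1) }. -/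

import Mathlib

/-!
The variance of `M_n` splits into two independent contributions.

Noise term. For every `X` of full column rank, `I - X (Xᵀ X)⁻¹ Xᵀ` is an orthogonal projection of
trace `n - s`, so by rotation invariance of the Gaussian law the quadratic form in `W` is `σ²` times
a chi-square variable with `n - s` degrees of freedom (`map_quadForm`). Since this conditional law
does not depend on `X`, the quadratic form is independent of `X`
(`measurePreserving_resid_quad`), and its variance is `2 (n - s) σ⁴`.

Design term. Write the rows of `X` as `B g` with `g` standard Gaussian, where rotation invariance
allows `B` to be chosen with first column proportional to `b` (`exists_adapted_factor`). Then
`bᵀ (Xᵀ X)⁻¹ b` is `κ = bᵀ Σ⁻¹ b` times the corner entry of the inverse Gram matrix of a standard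
Gaussian matrix. By the Schur complement formula (`inv_consCol`) this entry is the inverse of the
squared residual of the first column after regression on the other `s - 1` columns, so it is the
inverse of a chi-square variable with `n - s + 1` degrees of freedom (`map_inv_gaussMat`). The same
induction on columns shows that a Gaussian matrix almost surely has full column rank.

The first two inverse moments of the chi-square law come from integrating its Laplace transform
`(1 + 2 t)^(-k/2)` against `t^(a-1)`, using `x^(-a) Γ(a) = ∫₀^∞ t^(a-1) e^(-t x) dt`
(`lintegral_inv_rpow_chiSq`). They give the variance `2 / ((k - 2)² (k - 4))` of `1 / x`, which for
`k = n - s + 1` is the stated expression after simplification.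

For `s = 0` the design term vanishes identically.
-/

open MeasureTheory ProbabilityTheory Matrix Filter

/-- The standard Gaussian measure on `ι → ℝ`: i.i.d. standard normal coordinates. -/
noncomputable def stdGaussian (ι : Type*) [Fintype ι] : Measure (ι → ℝ) :=
  Measure.pi (fun _ : ι => gaussianReal 0 1)

/-- `μ` is the law of a centered Gaussian vector with covariance matrix `C`:
the law of `A • g` for a standard Gaussian `g`, where `A Aᵀ = C`. -/
def IsCenteredGaussianCov {ι : Type*} [Fintype ι] [DecidableEq ι]
    (μ : Measure (ι → ℝ)) (C : Matrix ι ι ℝ) : Prop :=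
  ∃ A : Matrix ι ι ℝ, A * Aᵀ = C ∧ μ = (stdGaussian ι).map (fun g => A.mulVec g)

/-- The law of `X : Ω → Fin n → ι → ℝ` (a random `n × ι` matrix, viewed as its rows)
is that of `n` i.i.d. rows, each centered Gaussian with covariance `C`. -/
def HasIIDGaussianRows {Ω : Type*} [MeasurableSpace Ω] (P : Measure Ω)
    {n : ℕ} {ι : Type*} [Fintype ι] [DecidableEq ι]
    (X : Ω → Fin n → ι → ℝ) (C : Matrix ι ι ℝ) : Prop :=
  ∃ ρ : Measure (ι → ℝ), IsCenteredGaussianCov ρ C ∧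
    Measure.map X P = Measure.pi (fun _ : Fin n => ρ)

/-- The random scaling factor `M_n` from the paper. -/
noncomputable def Mfac {n s : ℕ} (lam : ℝ) (b : Fin s → ℝ)
    (A : Matrix (Fin n) (Fin s) ℝ) (w : Fin n → ℝ) : ℝ :=
  lam ^ 2 * (b ⬝ᵥ (Aᵀ * A)⁻¹.mulVec b) +
    (1 / (n : ℝ) ^ 2) *
      (w ⬝ᵥ ((1 : Matrix (Fin n) (Fin n) ℝ) - A * (Aᵀ * A)⁻¹ * Aᵀ).mulVec w)


/-! ### Orthogonal invariance and projections of Gaussian vectors -/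

instance isProbabilityMeasure_stdGaussian' (ι : Type*) [Fintype ι] :
    IsProbabilityMeasure (_root_.stdGaussian ι) := by
  unfold _root_.stdGaussian; infer_instance

lemma charFunDual_stdGaussian_pi {ι : Type*} [Fintype ι] [DecidableEq ι]
    (L : StrongDual ℝ (ι → ℝ)) :
    charFunDual (_root_.stdGaussian ι) L
      = Complex.exp (-(∑ i, L (Pi.single i 1) ^ 2 : ℝ) / 2) := by
  have hL : ∀ v : ι → ℝ, L v = ∑ i, v i * L (Pi.single i 1) := by
    intro v
    conv_lhs => rw [← Finset.univ_sum_single v]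
    rw [map_sum]
    refine Finset.sum_congr rfl fun i _ => ?_
    have : (Pi.single i (v i) : ι → ℝ) = v i • Pi.single i 1 := by
      ext j; by_cases h : j = i <;> simp [h]
    rw [this, map_smul, smul_eq_mul]
  rw [charFunDual_apply, _root_.stdGaussian]
  have hexp : ∀ v : ι → ℝ, Complex.exp (L v * Complex.I)
      = ∏ i, Complex.exp (((v i * L (Pi.single i 1) : ℝ) : ℂ) * Complex.I) := by
    intro v
    rw [hL v, Complex.ofReal_sum, Finset.sum_mul, Complex.exp_sum]
  rw [integral_congr_ae (.of_forall hexp), integral_fintype_prod_eq_prod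
    (f := fun i (x : ℝ) ↦ Complex.exp (((x * L (Pi.single i 1) : ℝ) : ℂ) * Complex.I))]
  have : ∀ i, ∫ x : ℝ, Complex.exp (((x * L (Pi.single i 1) : ℝ) : ℂ) * Complex.I)
      ∂(gaussianReal 0 1) = charFun (gaussianReal 0 1) (L (Pi.single i 1)) := by
    intro i
    rw [charFun_apply_real]
    refine integral_congr_ae (.of_forall fun x => ?_)
    push_cast; ring_nf
  simp_rw [this, charFun_gaussianReal, ← Complex.exp_sum]
  congr 1
  push_cast
  rw [neg_div, Finset.sum_div, ← Finset.sum_neg_distrib]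
  refine Finset.sum_congr rfl fun i _ => ?_
  ring

/-- The image of a standard Gaussian vector under a matrix with orthonormal rows is again
standard Gaussian. This covers both rotation invariance and orthogonal projections. -/
lemma stdGaussian_map_mulVec {ι κ : Type*} [Fintype ι] [Fintype κ] [DecidableEq ι] [DecidableEq κ]
    (M : Matrix κ ι ℝ) (hM : M * Mᵀ = 1) :
    (_root_.stdGaussian ι).map (fun w => M *ᵥ w) = _root_.stdGaussian κ := by
  let F : (ι → ℝ) →L[ℝ] (κ → ℝ) := LinearMap.toContinuousLinearMap (Matrix.mulVecLin M)
  have hF : (fun w => M *ᵥ w) = ⇑F := rfl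
  have : IsProbabilityMeasure ((_root_.stdGaussian ι).map F) :=
    Measure.isProbabilityMeasure_map F.continuous.measurable.aemeasurable
  rw [hF]
  refine Measure.ext_of_charFunDual ?_
  ext L
  rw [charFunDual_map, charFunDual_stdGaussian_pi, charFunDual_stdGaussian_pi]
  congr 4
  have hcol : ∀ i, (L ∘SL F) (Pi.single i 1) = ∑ j, M j i * L (Pi.single j 1) := by
    intro i
    have h1 : F (Pi.single i 1) = ∑ j, M j i • (Pi.single j 1 : κ → ℝ) := by
      change M *ᵥ Pi.single i 1 = _
      ext j
      simp [Finset.sum_apply, Pi.single_apply]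
    rw [ContinuousLinearMap.comp_apply, h1, map_sum]
    simp
  simp_rw [hcol]
  have hrow : ∀ j k, ∑ i, M j i * M k i = if j = k then 1 else 0 := by
    intro j k
    have := congrFun (congrFun hM j) k
    simpa [Matrix.mul_apply, Matrix.one_apply] using this
  calc ∑ i, (∑ j, M j i * L (Pi.single j 1)) ^ 2
      = ∑ i, ∑ j, ∑ k, (M j i * M k i) * (L (Pi.single j 1) * L (Pi.single k 1)) := by
        refine Finset.sum_congr rfl fun i _ => ?_
        rw [sq, Finset.sum_mul_sum]
        refine Finset.sum_congr rfl fun j _ => Finset.sum_congr rfl fun k _ => by ring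
    _ = ∑ j, ∑ k, (∑ i, M j i * M k i) * (L (Pi.single j 1) * L (Pi.single k 1)) := by
        rw [Finset.sum_comm]
        refine Finset.sum_congr rfl fun j _ => ?_
        rw [Finset.sum_comm]
        simp_rw [Finset.sum_mul]
    _ = ∑ j, L (Pi.single j 1) ^ 2 := by
        simp_rw [hrow]; simp [sq]

/-- An orthogonal projection matrix of trace `k` has the form `Mᵀ M`, where the `k` rows of `M`
are orthonormal. -/
lemma exists_orthonormal_rows {n : ℕ} (Q : Matrix (Fin n) (Fin n) ℝ) (hs : Qᵀ = Q)
    (hi : Q * Q = Q) (k : ℕ) (ht : Q.trace = k) :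
    ∃ M : Matrix (Fin k) (Fin n) ℝ, M * Mᵀ = 1 ∧ Mᵀ * M = Q := by
  have hQ : Q.IsHermitian := by
    rw [Matrix.IsHermitian, Matrix.conjTranspose_eq_transpose_of_trivial]; exact hs
  set U : Matrix (Fin n) (Fin n) ℝ := hQ.eigenvectorUnitary.1 with hU
  have hU1 : Uᵀ * U = 1 := by
    have := Unitary.coe_star_mul_self hQ.eigenvectorUnitary
    rwa [Matrix.star_eq_conjTranspose, Matrix.conjTranspose_eq_transpose_of_trivial] at this
  have hU2 : U * Uᵀ = 1 := by
    have := Unitary.coe_mul_star_self hQ.eigenvectorUnitary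
    rwa [Unitary.coe_star, Matrix.star_eq_conjTranspose, Matrix.conjTranspose_eq_transpose_of_trivial] at this
  set d := hQ.eigenvalues with hd
  have hspec : Q = U * diagonal d * Uᵀ := by
    have := hQ.spectral_theorem
    rw [Unitary.conjStarAlgAut_apply] at this
    simpa [Matrix.star_eq_conjTranspose, Matrix.conjTranspose_eq_transpose_of_trivial] using this
  have hdd : diagonal d = Uᵀ * Q * U := by
    rw [hspec]
    calc diagonal d = (Uᵀ * U) * diagonal d * (Uᵀ * U) := by rw [hU1]; simp
      _ = _ := by simp only [Matrix.mul_assoc]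
  have hd01 : ∀ i, d i = 0 ∨ d i = 1 := by
    intro i
    have : diagonal d * diagonal d = diagonal d := by
      calc diagonal d * diagonal d = Uᵀ * Q * (U * Uᵀ) * Q * U := by
            rw [hdd]; simp only [Matrix.mul_assoc]
        _ = Uᵀ * (Q * Q) * U := by rw [hU2]; simp only [Matrix.mul_assoc, Matrix.one_mul]
        _ = diagonal d := by rw [hi, hdd]
    have h2 := congrFun (congrFun this i) i
    simp only [Matrix.diagonal_mul_diagonal, Matrix.diagonal_apply_eq] at h2
    have : d i * (d i - 1) = 0 := by linarith
    rcases mul_eq_zero.1 this with h | h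
    · exact Or.inl h
    · exact Or.inr (by linarith)
  have hcard : Fintype.card {i // d i = 1} = k := by
    have h1 : Q.trace = ∑ i, d i := by
      rw [hspec, Matrix.trace_mul_comm, ← Matrix.mul_assoc, hU1, Matrix.one_mul, Matrix.trace_diagonal]
    have h2 : ∑ i, d i = ∑ i, if d i = 1 then (1 : ℝ) else 0 := by
      refine Finset.sum_congr rfl fun i _ => ?_
      rcases hd01 i with h | h <;> simp [h]
    rw [Fintype.card_subtype]
    rw [Finset.sum_boole] at h2
    exact_mod_cast h2.symm.trans (h1.symm.trans ht)
  let e : Fin k ≃ {i // d i = 1} := (Fintype.equivFinOfCardEq hcard).symm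
  refine ⟨Matrix.of fun a j => U j (e a).1, ?_, ?_⟩
  · ext a b
    have := congrFun (congrFun hU1 (e a).1) (e b).1
    simp only [Matrix.mul_apply, Matrix.transpose_apply, Matrix.of_apply] at this ⊢
    rw [this, Matrix.one_apply, Matrix.one_apply]
    simp [Subtype.val_inj]
  · ext i j
    rw [hspec, Matrix.mul_apply, Matrix.mul_apply]
    simp only [Matrix.transpose_apply, Matrix.of_apply, Matrix.mul_diagonal]
    rw [e.sum_comp (fun x => U i x.1 * U j x.1)]
    rw [← Finset.sum_subtype (Finset.univ.filter fun x => d x = 1) (by simp)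
      (fun x => U i x * U j x), Finset.sum_filter]
    refine Finset.sum_congr rfl fun x _ => ?_
    rcases hd01 x with h | h <;> simp [h]

/-- The chi-square distribution with `k` degrees of freedom: the law of the sum of the squares of
`k` independent standard normal variables. -/
noncomputable def chiSq (k : ℕ) : Measure ℝ :=
  (_root_.stdGaussian (Fin k)).map (fun g => ∑ i, g i ^ 2)

lemma measurable_sumSq {ι : Type*} [Fintype ι] : Measurable (fun g : ι → ℝ => ∑ i, g i ^ 2) := by
  fun_prop

instance isProbabilityMeasure_chiSq (k : ℕ) : IsProbabilityMeasure (chiSq k) :=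
  Measure.isProbabilityMeasure_map measurable_sumSq.aemeasurable

/-- The squared length of the orthogonal projection of a standard Gaussian vector onto a
`k`-dimensional subspace is chi-square distributed with `k` degrees of freedom. -/
lemma map_quadForm {n : ℕ} (Q : Matrix (Fin n) (Fin n) ℝ) (hs : Qᵀ = Q)
    (hi : Q * Q = Q) (k : ℕ) (ht : Q.trace = k) :
    (_root_.stdGaussian (Fin n)).map (fun w => w ⬝ᵥ Q *ᵥ w) = chiSq k := by
  obtain ⟨M, hM1, hM2⟩ := exists_orthonormal_rows Q hs hi k ht
  have : (fun w : Fin n → ℝ => w ⬝ᵥ Q *ᵥ w)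
      = (fun g : Fin k → ℝ => ∑ i, g i ^ 2) ∘ (fun w => M *ᵥ w) := by
    ext w
    simp only [Function.comp]
    rw [← hM2, ← Matrix.mulVec_mulVec, Matrix.dotProduct_mulVec, Matrix.vecMul_transpose]
    simp [dotProduct, sq]
  rw [this, ← Measure.map_map measurable_sumSq (by fun_prop), stdGaussian_map_mulVec M hM1, chiSq]

/-! ### Moments of the chi-square and inverse chi-square distributions -/

lemma integral_exp_neg_mul_sq_gaussianReal {t : ℝ} (ht : 0 ≤ t) :
    ∫ x, Real.exp (-t * x ^ 2) ∂(gaussianReal 0 1) = (1 + 2 * t) ^ (-(1 / 2) : ℝ) := by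
  rw [integral_gaussianReal_eq_integral_smul one_ne_zero]
  have h1 : ∀ x : ℝ, gaussianPDFReal 0 1 x • Real.exp (-t * x ^ 2)
      = (√(2 * Real.pi))⁻¹ * Real.exp (-((1 + 2 * t) / 2) * x ^ 2) := by
    intro x
    rw [gaussianPDFReal, smul_eq_mul, mul_assoc, ← Real.exp_add]
    simp only [NNReal.coe_one, mul_one, sub_zero]
    congr 2; ring
  simp_rw [h1]
  rw [integral_const_mul, integral_gaussian, ← Real.sqrt_inv, ← Real.sqrt_mul (by positivity),
    Real.rpow_neg (by positivity), ← Real.sqrt_eq_rpow, ← Real.sqrt_inv]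
  congr 1
  have := Real.pi_pos
  field_simp

/-- The Laplace transform of the chi-square distribution. -/
lemma lintegral_exp_chiSq (k : ℕ) {t : ℝ} (ht : 0 ≤ t) :
    ∫⁻ x, ENNReal.ofReal (Real.exp (-t * x)) ∂(chiSq k)
      = ENNReal.ofReal ((1 + 2 * t) ^ (-(k / 2) : ℝ)) := by
  rw [chiSq, lintegral_map (by fun_prop) measurable_sumSq]
  have hprod : ∀ g : Fin k → ℝ, Real.exp (-t * ∑ i, g i ^ 2) = ∏ i, Real.exp (-t * g i ^ 2) := by
    intro g; rw [Finset.mul_sum, Real.exp_sum]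
  have hint : Integrable (fun g : Fin k → ℝ => Real.exp (-t * ∑ i, g i ^ 2))
      (_root_.stdGaussian (Fin k)) := by
    refine Integrable.of_bound (Measurable.aestronglyMeasurable (by fun_prop)) 1 (.of_forall fun g => ?_)
    rw [Real.norm_eq_abs, abs_of_pos (Real.exp_pos _), Real.exp_le_one_iff]
    have : 0 ≤ ∑ i, g i ^ 2 := Finset.sum_nonneg fun i _ => sq_nonneg _
    nlinarith
  rw [← ofReal_integral_eq_lintegral_ofReal hint (.of_forall fun g => (Real.exp_pos _).le)]
  congr 1
  simp_rw [hprod]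
  rw [_root_.stdGaussian, integral_fintype_prod_eq_prod (f := fun _ x => Real.exp (-t * x ^ 2))]
  simp_rw [integral_exp_neg_mul_sq_gaussianReal ht]
  rw [Finset.prod_const, Finset.card_univ, Fintype.card_fin, ← Real.rpow_natCast,
    ← Real.rpow_mul (by positivity)]
  congr 1; ring

lemma chiSq_ae_pos {k : ℕ} (hk : 0 < k) : ∀ᵐ x ∂(chiSq k), 0 < x := by
  rw [chiSq, ae_map_iff measurable_sumSq.aemeasurable measurableSet_Ioi]
  have h : ∀ᵐ g ∂(_root_.stdGaussian (Fin k)), g ⟨0, hk⟩ ≠ 0 := by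
    have h0 : ∀ᵐ x ∂(gaussianReal 0 1), x ≠ 0 := by
      have := nullSingletonClass_gaussianReal (μ := 0) (v := 1) one_ne_zero
      exact Measure.ae_ne _ _
    exact (measurePreserving_eval (fun _ : Fin k => gaussianReal 0 1) ⟨0, hk⟩).quasiMeasurePreserving.ae h0
  filter_upwards [h] with g hg
  exact Finset.sum_pos' (fun i _ => sq_nonneg _) ⟨⟨0, hk⟩, Finset.mem_univ _, by positivity⟩

/-- The representation `x^{-a} Γ(a) = ∫₀^∞ t^{a-1} e^{-tx} dt`. -/
lemma lintegral_rpow_mul_exp {a x : ℝ} (ha : 0 < a) (hx : 0 < x) :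
    ∫⁻ t in Set.Ioi (0 : ℝ), ENNReal.ofReal (t ^ (a - 1) * Real.exp (-t * x))
      = ENNReal.ofReal ((1 / x) ^ a * Real.Gamma a) := by
  have h := Real.integral_rpow_mul_exp_neg_mul_Ioi ha hx
  have hpos : 0 < (1 / x) ^ a * Real.Gamma a := by
    have := Real.Gamma_pos_of_pos ha
    positivity
  have hcongr : ∀ t : ℝ, t ^ (a - 1) * Real.exp (-(x * t)) = t ^ (a - 1) * Real.exp (-t * x) := by
    intro t; congr 2; ring
  simp_rw [hcongr] at h
  rw [← h, ofReal_integral_eq_lintegral_ofReal]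
  -- A Bochner integral with nonzero value is that of an integrable function.
  · by_contra hc
    have := integral_undef hc
    rw [this] at h
    exact hpos.ne h
  · refine (ae_restrict_iff' measurableSet_Ioi).2 (.of_forall fun t ht => ?_)
    have : (0 : ℝ) < t := ht
    positivity

lemma lintegral_inv_rpow_chiSq {k : ℕ} (hk : 0 < k) {a : ℝ} (ha : 0 < a) :
    ∫⁻ x, ENNReal.ofReal ((1 / x) ^ a * Real.Gamma a) ∂(chiSq k)
      = ∫⁻ t in Set.Ioi (0 : ℝ), ENNReal.ofReal (t ^ (a - 1) * (1 + 2 * t) ^ (-(k / 2) : ℝ)) := by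
  have h1 : ∫⁻ x, ENNReal.ofReal ((1 / x) ^ a * Real.Gamma a) ∂(chiSq k)
      = ∫⁻ x, (∫⁻ t in Set.Ioi (0 : ℝ), ENNReal.ofReal (t ^ (a - 1) * Real.exp (-t * x)))
        ∂(chiSq k) := by
    refine lintegral_congr_ae ?_
    filter_upwards [chiSq_ae_pos hk] with x hx
    rw [lintegral_rpow_mul_exp ha hx]
  rw [h1, lintegral_lintegral_swap (by fun_prop)]
  refine setLIntegral_congr_fun measurableSet_Ioi fun t ht => ?_
  have ht0 : (0 : ℝ) < t := ht
  have hp : 0 ≤ t ^ (a - 1) := by positivity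
  simp_rw [ENNReal.ofReal_mul hp]
  rw [lintegral_const_mul _ (by fun_prop), lintegral_exp_chiSq k ht0.le]

lemma hasDerivAt_one_add_rpow (p t : ℝ) (ht : 0 ≤ t) :
    HasDerivAt (fun t : ℝ => (1 + 2 * t) ^ p) (2 * p * (1 + 2 * t) ^ (p - 1)) t := by
  have h : HasDerivAt (fun t : ℝ => 1 + 2 * t) 2 t := by
    simpa using ((hasDerivAt_id t).const_mul 2).const_add 1
  have := h.rpow_const (p := p) (Or.inl (by positivity))
  convert! this using 1

lemma tendsto_one_add_rpow {p : ℝ} (hp : p < 0) :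
    Tendsto (fun t : ℝ => (1 + 2 * t) ^ p) atTop (nhds 0) := by
  have h1 := tendsto_rpow_neg_atTop (y := -p) (by linarith)
  rw [neg_neg] at h1
  refine h1.comp ?_
  exact tendsto_atTop_add_const_left _ _ (tendsto_id.const_mul_atTop (by norm_num))

lemma lintegral_Ioi_of_hasDerivAt {F f : ℝ → ℝ} {l : ℝ}
    (hd : ∀ x ∈ Set.Ici (0 : ℝ), HasDerivAt F (f x) x) (hn : ∀ x ∈ Set.Ioi (0 : ℝ), 0 ≤ f x)
    (hl : Tendsto F atTop (nhds l)) :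
    ∫⁻ t in Set.Ioi (0 : ℝ), ENNReal.ofReal (f t) = ENNReal.ofReal (l - F 0) := by
  rw [← integral_Ioi_of_hasDerivAt_of_nonneg' hd hn hl, ofReal_integral_eq_lintegral_ofReal]
  · exact integrableOn_Ioi_deriv_of_nonneg' hd hn hl
  · exact (ae_restrict_iff' measurableSet_Ioi).2 (.of_forall hn)

lemma lintegral_inv_chiSq {k : ℕ} (hk : 3 ≤ k) :
    ∫⁻ x, ENNReal.ofReal (1 / x) ∂(chiSq k) = ENNReal.ofReal (1 / ((k : ℝ) - 2)) := by
  have hk' : (3 : ℝ) ≤ k := by exact_mod_cast hk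
  have h := lintegral_inv_rpow_chiSq (k := k) (by omega) one_pos
  simp only [Real.rpow_one, Real.Gamma_one, mul_one, sub_self, Real.rpow_zero, one_mul] at h
  rw [h, lintegral_Ioi_of_hasDerivAt (l := 0)
    (F := fun t => -(1 / ((k : ℝ) - 2)) * (1 + 2 * t) ^ (1 - k / 2 : ℝ))]
  · simp
  · intro t ht
    have := (hasDerivAt_one_add_rpow (1 - k / 2) t ht).const_mul (-(1 / ((k : ℝ) - 2)))
    convert! this using 1
    have h2 : (k : ℝ) - 2 ≠ 0 := by linarith
    rw [show (1 - k / 2 - 1 : ℝ) = -(k / 2) by ring]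
    field_simp; ring
  · intro t ht
    have : (0 : ℝ) < t := ht
    positivity
  · simpa using (tendsto_one_add_rpow (p := 1 - k / 2) (by linarith)).const_mul
      (-(1 / ((k : ℝ) - 2)))

lemma lintegral_inv_sq_chiSq {k : ℕ} (hk : 5 ≤ k) :
    ∫⁻ x, ENNReal.ofReal ((1 / x) ^ 2) ∂(chiSq k)
      = ENNReal.ofReal (1 / (((k : ℝ) - 2) * ((k : ℝ) - 4))) := by
  have hk' : (5 : ℝ) ≤ k := by exact_mod_cast hk
  have h2 : (k : ℝ) - 2 ≠ 0 := by linarith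
  have h4 : (k : ℝ) - 4 ≠ 0 := by linarith
  have h := lintegral_inv_rpow_chiSq (k := k) (by omega) two_pos
  simp only [Real.rpow_two, Real.Gamma_two, mul_one, show (2 : ℝ) - 1 = 1 by norm_num,
    Real.rpow_one] at h
  -- The antiderivative comes from writing `t = ((1 + 2 * t) - 1) / 2`.
  rw [h, lintegral_Ioi_of_hasDerivAt (l := 0)
    (F := fun t => -(1 / (2 * ((k : ℝ) - 4))) * (1 + 2 * t) ^ (2 - k / 2 : ℝ)
      + (1 / (2 * ((k : ℝ) - 2))) * (1 + 2 * t) ^ (1 - k / 2 : ℝ))]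
  · simp only [mul_zero, add_zero, Real.one_rpow, mul_one]
    congr 1; field_simp; ring
  · intro t ht
    have ht0 : (0 : ℝ) ≤ t := ht
    have := ((hasDerivAt_one_add_rpow (2 - k / 2) t ht).const_mul (-(1 / (2 * ((k : ℝ) - 4))))).add
      ((hasDerivAt_one_add_rpow (1 - k / 2) t ht).const_mul (1 / (2 * ((k : ℝ) - 2))))
    convert! this using 1
    rw [show (1 - k / 2 - 1 : ℝ) = -(k / 2) by ring, show (2 - k / 2 - 1 : ℝ) = -(k / 2) + 1 by ring,
      Real.rpow_add_one (by positivity)]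
    field_simp; ring
  · intro t ht
    have : (0 : ℝ) < t := ht
    positivity
  · simpa using ((tendsto_one_add_rpow (p := 2 - k / 2) (by linarith)).const_mul
      (-(1 / (2 * ((k : ℝ) - 4))))).add ((tendsto_one_add_rpow (p := 1 - k / 2) (by linarith)).const_mul
      (1 / (2 * ((k : ℝ) - 2))))

lemma memLp_inv_chiSq {k : ℕ} (hk : 5 ≤ k) : MemLp (fun x => 1 / x) 2 (chiSq k) := by
  rw [memLp_two_iff_integrable_sq (by fun_prop)]
  refine ⟨by fun_prop, ?_⟩
  rw [hasFiniteIntegral_iff_ofReal (.of_forall fun x => sq_nonneg _), lintegral_inv_sq_chiSq hk]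
  exact ENNReal.ofReal_lt_top

/-- The variance of the inverse chi-square distribution. -/
lemma variance_inv_chiSq {k : ℕ} (hk : 5 ≤ k) :
    Var[fun x => 1 / x; chiSq k] = 2 / (((k : ℝ) - 2) ^ 2 * ((k : ℝ) - 4)) := by
  have hk' : (5 : ℝ) ≤ k := by exact_mod_cast hk
  have h2 : (0 : ℝ) < (k : ℝ) - 2 := by linarith
  have h4 : (0 : ℝ) < (k : ℝ) - 4 := by linarith
  rw [variance_eq_sub (memLp_inv_chiSq hk)]
  have e1 : ∫ x, 1 / x ∂(chiSq k) = 1 / ((k : ℝ) - 2) := by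
    rw [integral_eq_lintegral_of_nonneg_ae ?_ (by fun_prop), lintegral_inv_chiSq (by omega),
      ENNReal.toReal_ofReal (by positivity)]
    filter_upwards [chiSq_ae_pos (k := k) (by omega)] with x hx
    simp only [Pi.zero_apply]; positivity
  have e2 : ∫ x, ((fun x : ℝ => 1 / x) ^ 2) x ∂(chiSq k) = 1 / (((k : ℝ) - 2) * ((k : ℝ) - 4)) := by
    simp only [Pi.pow_apply]
    rw [integral_eq_lintegral_of_nonneg_ae (.of_forall fun x => sq_nonneg _) (by fun_prop),
      lintegral_inv_sq_chiSq hk, ENNReal.toReal_ofReal (by positivity)]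
  rw [e1, e2]
  field_simp; ring

/-- The fourth moment of a standard normal variable, as the fourth derivative at `0` of its moment
generating function `exp (t ^ 2 / 2)`. -/
lemma integral_pow_four_gaussianReal : ∫ x, x ^ 4 ∂(gaussianReal 0 1) = 3 := by
  have h := iteratedDeriv_mgf_zero (X := id) (μ := gaussianReal 0 1) (by simp) 4
  have hm : mgf id (gaussianReal 0 1) = fun t => Real.exp (t ^ 2 / 2) := by
    rw [mgf_id_gaussianReal]; ext t; simp
  have key : ∀ p p' : ℝ → ℝ, (∀ t, HasDerivAt p (p' t) t) →
      deriv (fun t => p t * Real.exp (t ^ 2 / 2))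
        = fun t => (p' t + t * p t) * Real.exp (t ^ 2 / 2) := by
    intro p p' hp
    ext t
    have he : HasDerivAt (fun t : ℝ => Real.exp (t ^ 2 / 2)) (Real.exp (t ^ 2 / 2) * t) t := by
      have := (((hasDerivAt_id t).pow 2).div_const 2).exp
      convert! this using 1
      simp
    refine ((hp t).mul he).deriv.trans ?_; ring
  have d0 : (fun t : ℝ => Real.exp (t ^ 2 / 2)) = fun t => (fun _ => (1 : ℝ)) t * Real.exp (t ^ 2 / 2) := by
    simp
  rw [hm, iteratedDeriv_succ', iteratedDeriv_succ', iteratedDeriv_succ', iteratedDeriv_succ',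
    iteratedDeriv_zero, d0, key _ _ (fun t => hasDerivAt_const t 1)] at h
  rw [key _ (fun _ => 1) (fun t => by simpa using hasDerivAt_id' t),
    key _ (fun t => 2 * t) (fun t => by
      have := ((hasDerivAt_id t).pow 2).const_add 1
      convert! this using 1 <;> first | (ext; simp; ring) | simp),
    key _ (fun t => 3 + 3 * t ^ 2) (fun t => by
      have := ((hasDerivAt_id t).const_mul 3).add ((hasDerivAt_id t).pow 3)
      convert! this using 1 <;> first | (ext; simp; ring) | simp)] at h
  simp at h
  exact h.symm

lemma memLp_sq_gaussianReal : MemLp (fun x : ℝ => x ^ 2) 2 (gaussianReal 0 1) := by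
  rw [memLp_two_iff_integrable_sq (by fun_prop)]
  have := (memLp_id_gaussianReal (μ := 0) (v := 1) 4).integrable_norm_pow (p := 4) (by norm_num)
  refine this.congr (.of_forall fun x => ?_)
  simp only [id, Real.norm_eq_abs]
  rw [← pow_mul, Even.pow_abs (by decide)]

lemma variance_sq_gaussianReal : Var[fun x => x ^ 2; gaussianReal 0 1] = 2 := by
  rw [variance_eq_sub memLp_sq_gaussianReal]
  have h2 : ∫ x, x ^ 2 ∂(gaussianReal 0 1) = 1 := by
    have := variance_id_gaussianReal (μ := 0) (v := 1)
    rw [variance_eq_sub (memLp_id_gaussianReal' 2 (by simp))] at this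
    simpa using this
  have h4 : ∫ x, ((fun x : ℝ => x ^ 2) ^ 2) x ∂(gaussianReal 0 1) = 3 := by
    rw [← integral_pow_four_gaussianReal]
    refine integral_congr_ae (.of_forall fun x => ?_)
    simp only [Pi.pow_apply]; ring
  rw [h2, h4]; norm_num

lemma memLp_id_chiSq (k : ℕ) : MemLp id 2 (chiSq k) := by
  rw [chiSq, memLp_map_measure_iff (by fun_prop) measurable_sumSq.aemeasurable]
  have : (id ∘ fun g : Fin k → ℝ => ∑ i, g i ^ 2) = fun g => ∑ i, (fun g : Fin k → ℝ => g i ^ 2) g := by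
    ext g; simp
  rw [this]
  refine memLp_finsetSum _ fun i _ => ?_
  exact memLp_sq_gaussianReal.comp_measurePreserving
    (measurePreserving_eval (fun _ : Fin k => gaussianReal 0 1) i)

lemma variance_id_chiSq (k : ℕ) : Var[id; chiSq k] = 2 * k := by
  rw [chiSq, variance_map (by fun_prop) measurable_sumSq.aemeasurable, _root_.stdGaussian]
  have : (id ∘ fun g : Fin k → ℝ => ∑ i, g i ^ 2)
      = ∑ i : Fin k, fun g : Fin k → ℝ => (fun x : ℝ => x ^ 2) (g i) := by
    ext g; simp
  rw [this, variance_sum_pi (X := fun _ x => x ^ 2) (fun _ => memLp_sq_gaussianReal)]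
  simp [variance_sq_gaussianReal, mul_comm]

/-! ### Gram matrices of Gaussian matrices -/

/-- The projection matrix onto the orthogonal complement of the column space of `A`
(when `A` has full column rank). -/
noncomputable def resid {n s : ℕ} (A : Matrix (Fin n) (Fin s) ℝ) : Matrix (Fin n) (Fin n) ℝ :=
  1 - A * (Aᵀ * A)⁻¹ * Aᵀ

lemma resid_transpose {n s : ℕ} (A : Matrix (Fin n) (Fin s) ℝ) : (resid A)ᵀ = resid A := by
  simp [resid, Matrix.transpose_mul, Matrix.transpose_nonsing_inv, Matrix.mul_assoc]

lemma resid_mul {n s : ℕ} (A : Matrix (Fin n) (Fin s) ℝ) (h : IsUnit (Aᵀ * A).det) :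
    resid A * A = 0 := by
  rw [resid, Matrix.sub_mul, Matrix.one_mul, Matrix.mul_assoc, Matrix.mul_assoc,
    Matrix.nonsing_inv_mul _ h, Matrix.mul_one, sub_self]

lemma resid_idem {n s : ℕ} (A : Matrix (Fin n) (Fin s) ℝ) (h : IsUnit (Aᵀ * A).det) :
    resid A * resid A = resid A := by
  conv_lhs => enter [2]; rw [resid]
  rw [Matrix.mul_sub, Matrix.mul_one, ← Matrix.mul_assoc, ← Matrix.mul_assoc, resid_mul A h]
  simp

lemma resid_trace {n s : ℕ} (hs : s ≤ n) (A : Matrix (Fin n) (Fin s) ℝ)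
    (h : IsUnit (Aᵀ * A).det) : (resid A).trace = ((n - s : ℕ) : ℝ) := by
  rw [resid, Matrix.trace_sub, Matrix.trace_mul_comm, ← Matrix.mul_assoc,
    Matrix.mul_nonsing_inv _ h]
  simp [Nat.cast_sub hs]

/-- The matrix with first column `g` and remaining columns those of `H`. -/
def consCol {n s : ℕ} (g : Fin n → ℝ) (H : Fin n → Fin s → ℝ) : Fin n → Fin (s + 1) → ℝ :=
  fun i => Fin.cons (g i) (H i)

lemma consCol_mulVec {n s : ℕ} (g : Fin n → ℝ) (H : Fin n → Fin s → ℝ) (a : ℝ) (y : Fin s → ℝ) :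
    Matrix.of (consCol g H) *ᵥ (Fin.cons a y : Fin (s + 1) → ℝ)
      = a • g + Matrix.of H *ᵥ y := by
  ext i
  simp [Matrix.mulVec, dotProduct, consCol, Fin.sum_univ_succ, mul_comm]

/-- Adjoining to `H` a column outside of its column space preserves full column rank. -/
lemma isUnit_det_consCol {n s : ℕ} (g : Fin n → ℝ) (H : Fin n → Fin s → ℝ)
    (hH : IsUnit ((Matrix.of H)ᵀ * Matrix.of H).det)
    (hq : 0 < g ⬝ᵥ resid (Matrix.of H) *ᵥ g) :
    IsUnit ((Matrix.of (consCol g H))ᵀ * Matrix.of (consCol g H)).det := by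
  rw [isUnit_iff_ne_zero]
  intro h0
  obtain ⟨v, hv0, hv⟩ := Matrix.exists_mulVec_eq_zero_iff.2 h0
  obtain ⟨a, y, rfl⟩ : ∃ a y, v = (Fin.cons a y : Fin (s + 1) → ℝ) :=
    ⟨v 0, Fin.tail v, (Fin.cons_self_tail v).symm⟩
  have h1 : Matrix.of (consCol g H) *ᵥ (Fin.cons a y : Fin (s + 1) → ℝ) = 0 := by
    rw [← Matrix.conjTranspose_mul_self_mulVec_eq_zero,
      Matrix.conjTranspose_eq_transpose_of_trivial]
    exact hv
  rw [consCol_mulVec] at h1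
  have h2 : a * (g ⬝ᵥ resid (Matrix.of H) *ᵥ g) = 0 := by
    have := congrArg (fun z => g ⬝ᵥ resid (Matrix.of H) *ᵥ z) h1
    simpa [Matrix.mulVec_add, Matrix.mulVec_smul, Matrix.mulVec_mulVec, resid_mul _ hH] using this
  have ha : a = 0 := (mul_eq_zero.1 h2).resolve_right hq.ne'
  subst ha
  have h3 : Matrix.of H *ᵥ y = 0 := by simpa using h1
  have h4 : y = 0 := by
    have h5 : ((Matrix.of H)ᵀ * Matrix.of H) *ᵥ y = 0 := by
      rw [← Matrix.mulVec_mulVec, h3, Matrix.mulVec_zero]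
    by_contra hy
    exact hH.ne_zero (Matrix.exists_mulVec_eq_zero_iff.1 ⟨y, hy, h5⟩)
  refine hv0 ?_
  subst h4
  ext i
  refine Fin.cases ?_ (fun j => ?_) i <;> simp

/-- The Schur complement formula: the corner entry of the inverse Gram matrix is the inverse of the
squared distance of the first column to the span of the others. -/
lemma inv_consCol {n s : ℕ} (g : Fin n → ℝ) (H : Fin n → Fin s → ℝ)
    (hH : IsUnit ((Matrix.of H)ᵀ * Matrix.of H).det)
    (hq : 0 < g ⬝ᵥ resid (Matrix.of H) *ᵥ g) :
    ((Matrix.of (consCol g H))ᵀ * Matrix.of (consCol g H))⁻¹ 0 0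
      = 1 / (g ⬝ᵥ resid (Matrix.of H) *ᵥ g) := by
  have hU := isUnit_det_consCol g H hH hq
  set q := g ⬝ᵥ resid (Matrix.of H) *ᵥ g with hqdef
  set C := Matrix.of (consCol g H) with hC
  -- The coefficient vector of the residual of `g` after regression on the columns of `H`.
  set v : Fin (s + 1) → ℝ :=
    Fin.cons 1 (-(((Matrix.of H)ᵀ * Matrix.of H)⁻¹ *ᵥ ((Matrix.of H)ᵀ *ᵥ g))) with hv
  have h1 : C *ᵥ v = resid (Matrix.of H) *ᵥ g := by
    rw [hC, hv, consCol_mulVec, resid, Matrix.sub_mulVec, Matrix.mulVec_neg]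
    simp [Matrix.mulVec_mulVec, sub_eq_add_neg, Matrix.mul_assoc]
  have h2 : (Cᵀ * C) *ᵥ v = q • Pi.single 0 1 := by
    rw [← Matrix.mulVec_mulVec, h1]
    ext j
    refine Fin.cases ?_ (fun j => ?_) j
    · rw [hqdef]
      simp [Matrix.mulVec, dotProduct, hC, consCol]
    · have h3 : (Matrix.of H)ᵀ *ᵥ (resid (Matrix.of H) *ᵥ g) = 0 := by
        have : (Matrix.of H)ᵀ * resid (Matrix.of H) = 0 := by
          rw [← resid_transpose, ← Matrix.transpose_mul, resid_mul _ hH, Matrix.transpose_zero]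
        rw [Matrix.mulVec_mulVec, this, Matrix.zero_mulVec]
      have := congrFun h3 j
      simp only [Matrix.mulVec, dotProduct, Matrix.transpose_apply, Matrix.of_apply] at this
      simpa [Matrix.mulVec, dotProduct, hC, consCol] using this
  have h3 : v = q • ((Cᵀ * C)⁻¹ *ᵥ Pi.single 0 1) := by
    rw [← Matrix.mulVec_smul, ← h2, Matrix.mulVec_mulVec, Matrix.nonsing_inv_mul _ hU,
      Matrix.one_mulVec]
  have h4 := congrFun h3 0
  simp [hv] at h4
  rw [eq_div_iff hq.ne', mul_comm]
  exact h4.symm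

/-- The law of an `n × s` matrix with independent standard normal entries. -/
noncomputable def gaussMat (n s : ℕ) : Measure (Fin n → Fin s → ℝ) :=
  Measure.pi fun _ => _root_.stdGaussian (Fin s)

instance isProbabilityMeasure_gaussMat (n s : ℕ) : IsProbabilityMeasure (gaussMat n s) := by
  unfold gaussMat; infer_instance

lemma measurePreserving_consCol (n s : ℕ) :
    MeasurePreserving (fun p : (Fin n → Fin s → ℝ) × (Fin n → ℝ) => consCol p.2 p.1)
      ((gaussMat n s).prod (_root_.stdGaussian (Fin n))) (gaussMat n (s + 1)) := by
  have h1 : MeasurePreserving Prod.swap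
      ((gaussMat n s).prod (_root_.stdGaussian (Fin n)))
      ((_root_.stdGaussian (Fin n)).prod (gaussMat n s)) := Measure.measurePreserving_swap
  have h2 := (measurePreserving_arrowProdEquivProdArrow ℝ (Fin s → ℝ) (Fin n)
    (fun _ => gaussianReal 0 1) (fun _ => _root_.stdGaussian (Fin s))).symm
  have h3 := (measurePreserving_piFinSuccAbove (n := s) (fun _ => gaussianReal 0 1) 0).symm
  have h4 := measurePreserving_pi (ι := Fin n) (fun _ => (gaussianReal 0 1).prod
      (_root_.stdGaussian (Fin s))) (fun _ => _root_.stdGaussian (Fin (s + 1))) (fun _ => h3)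
  have h5 := h4.comp (h2.comp h1)
  have he : (fun p : (Fin n → Fin s → ℝ) × (Fin n → ℝ) => consCol p.2 p.1)
      = (fun a i => (MeasurableEquiv.piFinSuccAbove (fun _ => ℝ) 0).symm (a i)) ∘
        ⇑(MeasurableEquiv.arrowProdEquivProdArrow ℝ (Fin s → ℝ) (Fin n)).symm ∘ Prod.swap := by
    ext p i j
    refine Fin.cases ?_ (fun j => ?_) j <;>
    simp [consCol, MeasurableEquiv.piFinSuccAbove, MeasurableEquiv.arrowProdEquivProdArrow,
      Equiv.arrowProdEquivProdArrow]
  rw [he]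
  exact h5

lemma continuous_gram {n s : ℕ} : Continuous
    (fun X : Fin n → Fin s → ℝ => (Matrix.of X)ᵀ * Matrix.of X) :=
  Continuous.matrix_mul (Continuous.matrix_transpose continuous_id) continuous_id

lemma measurable_gram_inv {n s : ℕ} (i j : Fin s) : Measurable
    (fun X : Fin n → Fin s → ℝ => ((Matrix.of X)ᵀ * Matrix.of X)⁻¹ i j) := by
  simp only [Matrix.inv_def, Ring.inverse_eq_inv', Matrix.smul_apply, smul_eq_mul]
  exact (Continuous.matrix_det continuous_gram).measurable.inv.mul
    ((Continuous.matrix_adjugate continuous_gram).matrix_elem i j).measurable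

lemma measurable_gram_quad {n s : ℕ} (b : Fin s → ℝ) : Measurable
    (fun X : Fin n → Fin s → ℝ => b ⬝ᵥ ((Matrix.of X)ᵀ * Matrix.of X)⁻¹ *ᵥ b) := by
  simp only [dotProduct, Matrix.mulVec]
  exact Finset.measurable_sum _ fun i _ => (Finset.measurable_sum _ fun j _ =>
    (measurable_gram_inv i j).mul_const _).const_mul _

lemma measurable_resid {n s : ℕ} (i j : Fin n) : Measurable
    (fun X : Fin n → Fin s → ℝ => resid (Matrix.of X) i j) := by
  have he : ∀ X : Fin n → Fin s → ℝ, resid (Matrix.of X) i j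
      = (1 : Matrix (Fin n) (Fin n) ℝ) i j
        - ∑ k, (∑ l, X i l * ((Matrix.of X)ᵀ * Matrix.of X)⁻¹ l k) * X j k := by
    intro X
    rw [resid, Matrix.sub_apply, Matrix.mul_apply]
    congr 1
  simp_rw [he]
  refine measurable_const.sub (Finset.measurable_sum _ fun k _ =>
    (Finset.measurable_sum _ fun l _ => ?_).mul (by fun_prop))
  exact Measurable.mul (by fun_prop) (measurable_gram_inv l k)

lemma measurable_resid_quad {n s : ℕ} : Measurable
    (fun p : (Fin n → Fin s → ℝ) × (Fin n → ℝ) => p.2 ⬝ᵥ resid (Matrix.of p.1) *ᵥ p.2) := by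
  simp only [dotProduct, Matrix.mulVec]
  refine Finset.measurable_sum _ fun i _ => Measurable.mul (by fun_prop)
    (Finset.measurable_sum _ fun j _ => Measurable.mul ?_ (by fun_prop))
  exact (measurable_resid i j).comp measurable_fst

lemma measurableSet_isUnit_gram {n s : ℕ} : MeasurableSet
    {X : Fin n → Fin s → ℝ | IsUnit ((Matrix.of X)ᵀ * Matrix.of X).det} := by
  simp only [isUnit_iff_ne_zero]
  exact ((Continuous.matrix_det continuous_gram).measurable (measurableSet_singleton 0)).compl

/-- If the law `τ` of the squared length of the projection of a random vector onto a subspace of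
dimension `n - s` is the same for all such subspaces, then the squared length of its residual after
regression on a full-rank random matrix independent of it also has law `τ`, and is independent of
that matrix. -/
lemma measurePreserving_resid_quad {n s : ℕ} (hs : s ≤ n) (μ : Measure (Fin n → Fin s → ℝ))
    [IsProbabilityMeasure μ]
    (hμ : ∀ᵐ X ∂μ, IsUnit ((Matrix.of X)ᵀ * Matrix.of X).det)
    (ν : Measure (Fin n → ℝ)) [IsProbabilityMeasure ν] (τ : Measure ℝ)
    (hν : ∀ Q : Matrix (Fin n) (Fin n) ℝ, Qᵀ = Q → Q * Q = Q → Q.trace = ((n - s : ℕ) : ℝ) →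
      ν.map (fun w => w ⬝ᵥ Q *ᵥ w) = τ) :
    MeasurePreserving (fun p : (Fin n → Fin s → ℝ) × (Fin n → ℝ) =>
      (p.1, p.2 ⬝ᵥ resid (Matrix.of p.1) *ᵥ p.2)) (μ.prod ν) (μ.prod τ) := by
  refine MeasurePreserving.skew_product (f := id)
    (g := fun X w => w ⬝ᵥ resid (Matrix.of X) *ᵥ w) (MeasurePreserving.id μ)
    measurable_resid_quad ?_
  filter_upwards [hμ] with X hX
  exact hν _ (resid_transpose _) (resid_idem _ hX) (resid_trace hs _ hX)

lemma measurePreserving_gaussMat_resid {n s : ℕ} (hs : s ≤ n)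
    (h : ∀ᵐ X ∂(gaussMat n s), IsUnit ((Matrix.of X)ᵀ * Matrix.of X).det) :
    MeasurePreserving (fun p : (Fin n → Fin s → ℝ) × (Fin n → ℝ) =>
      (p.1, p.2 ⬝ᵥ resid (Matrix.of p.1) *ᵥ p.2))
      ((gaussMat n s).prod (_root_.stdGaussian (Fin n))) ((gaussMat n s).prod (chiSq (n - s))) :=
  measurePreserving_resid_quad hs _ h _ _ fun Q h1 h2 h3 => map_quadForm Q h1 h2 _ h3

lemma ae_resid_pos {n s : ℕ} (hs : s < n)
    (h : ∀ᵐ X ∂(gaussMat n s), IsUnit ((Matrix.of X)ᵀ * Matrix.of X).det) :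
    ∀ᵐ p ∂((gaussMat n s).prod (_root_.stdGaussian (Fin n))),
      IsUnit ((Matrix.of p.1)ᵀ * Matrix.of p.1).det ∧
        0 < p.2 ⬝ᵥ resid (Matrix.of p.1) *ᵥ p.2 := by
  have h1 := measurePreserving_gaussMat_resid hs.le h
  have h2 := (measurePreserving_snd (μ := gaussMat n s) (ν := chiSq (n - s))).comp h1
  have h3 := h2.quasiMeasurePreserving.ae (chiSq_ae_pos (by omega))
  have h4 := (measurePreserving_fst (μ := gaussMat n s)
    (ν := _root_.stdGaussian (Fin n))).quasiMeasurePreserving.ae h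
  filter_upwards [h3, h4] with p hp3 hp4
  exact ⟨hp4, hp3⟩

/-- A Gaussian matrix with at least as many rows as columns almost surely has full column rank. -/
lemma ae_isUnit_gaussMat {n s : ℕ} (hs : s ≤ n) :
    ∀ᵐ X ∂(gaussMat n s), IsUnit ((Matrix.of X)ᵀ * Matrix.of X).det := by
  induction s with
  | zero => exact .of_forall fun X => by simp
  | succ s ih =>
    have h := measurePreserving_consCol n s
    rw [← h.map_eq, ae_map_iff h.measurable.aemeasurable measurableSet_isUnit_gram]
    filter_upwards [ae_resid_pos hs (ih (by omega))] with p hp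
    exact isUnit_det_consCol _ _ hp.1 hp.2

/-- A diagonal entry of the inverse Gram matrix of a Gaussian matrix has an inverse chi-square
distribution. -/
lemma map_inv_gaussMat {n s : ℕ} (hs : s < n) :
    (gaussMat n (s + 1)).map (fun X => ((Matrix.of X)ᵀ * Matrix.of X)⁻¹ 0 0)
      = (chiSq (n - s)).map (fun x => 1 / x) := by
  have h := measurePreserving_consCol n s
  have hu := ae_isUnit_gaussMat (n := n) (s := s) hs.le
  have h2 := (measurePreserving_snd (μ := gaussMat n s) (ν := chiSq (n - s))).comp
    (measurePreserving_gaussMat_resid hs.le hu)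
  rw [← h.map_eq, ← h2.map_eq, Measure.map_map (measurable_gram_inv 0 0) h.measurable,
    Measure.map_map (by fun_prop) h2.measurable]
  refine Measure.map_congr ?_
  filter_upwards [ae_resid_pos hs hu] with p hp
  exact inv_consCol _ _ hp.1 hp.2

/-! ### Gaussian rows with a general covariance -/

/-- Every unit vector is the first column of an orthogonal matrix. -/
lemma exists_orthogonal_col {s : ℕ} (u : Fin (s + 1) → ℝ) (hu : u ⬝ᵥ u = 1) :
    ∃ O : Matrix (Fin (s + 1)) (Fin (s + 1)) ℝ, O * Oᵀ = 1 ∧ O *ᵥ Pi.single 0 1 = u := by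
  have hv : Orthonormal ℝ (({0} : Set (Fin (s + 1))).domRestrict
      (fun _ => (WithLp.toLp 2 u : EuclideanSpace ℝ (Fin (s + 1))))) := by
    constructor
    · intro i
      rw [Set.domRestrict_apply, EuclideanSpace.norm_eq, Real.sqrt_eq_one]
      rw [← hu]
      simp [dotProduct, sq]
    · intro i j hij
      exact absurd (Subsingleton.elim i j) hij
  obtain ⟨ob, hob⟩ := hv.exists_orthonormalBasis_extension_of_card_eq (by simp)
  refine ⟨Matrix.of fun i j => ob j i, ?_, ?_⟩
  · rw [mul_eq_one_comm]
    ext j k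
    have := orthonormal_iff_ite.1 ob.orthonormal j k
    rw [Matrix.one_apply, ← this]
    simp [Matrix.mul_apply, PiLp.inner_apply, mul_comm]
  · ext i
    have := hob 0 rfl
    simp [this]

lemma isUnit_det_of_mul_transpose {s : ℕ} {S A : Matrix (Fin s) (Fin s) ℝ} (hS : S.PosDef)
    (hA : A * Aᵀ = S) : IsUnit A.det := by
  have h := hS.det_pos
  rw [← hA, Matrix.det_mul, Matrix.det_transpose] at h
  rw [isUnit_iff_ne_zero]
  rintro h0
  simp [h0] at h

/-- By rotation invariance, the square root of the covariance matrix may be chosen so that its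
first column points in the direction of `b`. -/
lemma exists_adapted_factor {s : ℕ} {S A : Matrix (Fin (s + 1)) (Fin (s + 1)) ℝ} (hS : S.PosDef)
    (hA : A * Aᵀ = S) (b : Fin (s + 1) → ℝ) (hb : b ≠ 0) :
    ∃ B : Matrix (Fin (s + 1)) (Fin (s + 1)) ℝ, IsUnit B.det ∧
      (_root_.stdGaussian (Fin (s + 1))).map (fun g => A *ᵥ g)
        = (_root_.stdGaussian (Fin (s + 1))).map (fun g => B *ᵥ g) ∧
      b = √(b ⬝ᵥ S⁻¹ *ᵥ b) • B *ᵥ Pi.single 0 1 := by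
  have hAu := isUnit_det_of_mul_transpose hS hA
  set c := A⁻¹ *ᵥ b with hc
  have hAc : A *ᵥ c = b := by
    rw [hc, Matrix.mulVec_mulVec, Matrix.mul_nonsing_inv _ hAu, Matrix.one_mulVec]
  have hk : b ⬝ᵥ S⁻¹ *ᵥ b = c ⬝ᵥ c := by
    rw [← hA, Matrix.mul_inv_rev, ← Matrix.mulVec_mulVec, ← hc, Matrix.dotProduct_mulVec,
      ← Matrix.transpose_nonsing_inv, Matrix.vecMul_transpose]
  have hc0 : c ≠ 0 := by
    rintro h; rw [h, Matrix.mulVec_zero] at hAc; exact hb hAc.symm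
  have hpos : 0 < c ⬝ᵥ c := by
    have h1 : 0 ≤ c ⬝ᵥ c := Finset.sum_nonneg fun i _ => mul_self_nonneg _
    exact lt_of_le_of_ne h1 fun h => hc0 (dotProduct_self_eq_zero.1 h.symm)
  rw [hk]
  set r := √(c ⬝ᵥ c) with hr
  have hr0 : 0 < r := Real.sqrt_pos.2 hpos
  have hrr : r * r = c ⬝ᵥ c := Real.mul_self_sqrt hpos.le
  obtain ⟨O, hO, hO0⟩ := exists_orthogonal_col (r⁻¹ • c) (by
    rw [smul_dotProduct, dotProduct_smul, ← hrr, smul_eq_mul, smul_eq_mul]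
    field_simp)
  have hOu : IsUnit O.det := by
    rw [isUnit_iff_ne_zero]; rintro h0
    have := congrArg Matrix.det hO
    simp [h0] at this
  refine ⟨A * O, ?_, ?_, ?_⟩
  · rw [Matrix.det_mul]; exact hAu.mul hOu
  · conv_lhs => rw [← stdGaussian_map_mulVec O hO]
    rw [Measure.map_map (by fun_prop) (by fun_prop)]
    congr 1
    ext g : 1
    simp [Matrix.mulVec_mulVec]
  · rw [← Matrix.mulVec_mulVec, hO0, Matrix.mulVec_smul, hAc, smul_smul,
      mul_inv_cancel₀ hr0.ne', one_smul]

lemma pi_map_mulVec (n : ℕ) {s : ℕ} (B : Matrix (Fin s) (Fin s) ℝ) :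
    (Measure.pi fun _ : Fin n => (_root_.stdGaussian (Fin s)).map (fun g => B *ᵥ g))
      = (gaussMat n s).map (fun G i => B *ᵥ G i) := by
  have hp : IsProbabilityMeasure ((_root_.stdGaussian (Fin s)).map (fun g => B *ᵥ g)) :=
    Measure.isProbabilityMeasure_map (by fun_prop)
  rw [gaussMat, Measure.pi_map_pi (fun i => by fun_prop)]

lemma of_rows_mulVec {n s : ℕ} (B : Matrix (Fin s) (Fin s) ℝ) (G : Fin n → Fin s → ℝ) :
    Matrix.of (fun i => B *ᵥ G i) = Matrix.of G * Bᵀ := by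
  ext i j
  simp [Matrix.mulVec, dotProduct, Matrix.mul_apply, mul_comm]

lemma measurable_rows_mulVec {n s : ℕ} (B : Matrix (Fin s) (Fin s) ℝ) :
    Measurable (fun (G : Fin n → Fin s → ℝ) i => B *ᵥ G i) :=
  measurable_pi_lambda _ fun i => by fun_prop

lemma gram_rows_mulVec {n s : ℕ} (B : Matrix (Fin s) (Fin s) ℝ) (G : Fin n → Fin s → ℝ) :
    (Matrix.of (fun i => B *ᵥ G i))ᵀ * Matrix.of (fun i => B *ᵥ G i)
      = B * ((Matrix.of G)ᵀ * Matrix.of G) * Bᵀ := by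
  rw [of_rows_mulVec]
  simp [Matrix.transpose_mul, Matrix.mul_assoc]

lemma ae_isUnit_gram {n s : ℕ} (hs : s ≤ n) {S : Matrix (Fin s) (Fin s) ℝ} (hS : S.PosDef)
    {ρ : Measure (Fin s → ℝ)} (hρ : IsCenteredGaussianCov ρ S) :
    ∀ᵐ X ∂(Measure.pi fun _ : Fin n => ρ), IsUnit ((Matrix.of X)ᵀ * Matrix.of X).det := by
  obtain ⟨A, hA, rfl⟩ := hρ
  have hAu := isUnit_det_of_mul_transpose hS hA
  rw [pi_map_mulVec, ae_map_iff (measurable_rows_mulVec A).aemeasurable measurableSet_isUnit_gram]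
  filter_upwards [ae_isUnit_gaussMat hs] with G hG
  rw [gram_rows_mulVec, Matrix.det_mul, Matrix.det_mul, Matrix.det_transpose]
  exact (hAu.mul hG).mul hAu

/-- For a Gaussian matrix `X` with i.i.d. rows of covariance `S`, the quadratic form
`bᵀ (Xᵀ X)⁻¹ b` is `bᵀ S⁻¹ b` times the inverse of a chi-square variable. As `X` has `s + 1`
columns, there are `n - s` degrees of freedom. -/
lemma map_gram_quad {n s : ℕ} (hs : s < n) {S : Matrix (Fin (s + 1)) (Fin (s + 1)) ℝ}
    (hS : S.PosDef) {ρ : Measure (Fin (s + 1) → ℝ)} (hρ : IsCenteredGaussianCov ρ S)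
    (b : Fin (s + 1) → ℝ) (hb : b ≠ 0) :
    (Measure.pi fun _ : Fin n => ρ).map
        (fun X => b ⬝ᵥ ((Matrix.of X)ᵀ * Matrix.of X)⁻¹ *ᵥ b)
      = (chiSq (n - s)).map (fun x => (b ⬝ᵥ S⁻¹ *ᵥ b) * (1 / x)) := by
  obtain ⟨A, hA, rfl⟩ := hρ
  obtain ⟨B, hBu, hAB, hbB⟩ := exists_adapted_factor hS hA b hb
  have hk : 0 ≤ b ⬝ᵥ S⁻¹ *ᵥ b := by
    have := hS.inv.posSemidef.dotProduct_mulVec_nonneg b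
    simpa using this
  set κ := b ⬝ᵥ S⁻¹ *ᵥ b with hκ
  rw [hAB, pi_map_mulVec, Measure.map_map (measurable_gram_quad b) (measurable_rows_mulVec B)]
  have h1 : (fun X : Fin n → Fin (s + 1) → ℝ => b ⬝ᵥ ((Matrix.of X)ᵀ * Matrix.of X)⁻¹ *ᵥ b) ∘
      (fun (G : Fin n → Fin (s + 1) → ℝ) i => B *ᵥ G i)
      = (fun y => κ * y) ∘ fun G : Fin n → Fin (s + 1) → ℝ => ((Matrix.of G)ᵀ * Matrix.of G)⁻¹ 0 0 := by
    ext G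
    simp only [Function.comp]
    rw [gram_rows_mulVec, Matrix.mul_inv_rev, Matrix.mul_inv_rev]
    set N := ((Matrix.of G)ᵀ * Matrix.of G)⁻¹
    have h2 : B⁻¹ *ᵥ b = √κ • Pi.single 0 1 := by
      rw [hbB, Matrix.mulVec_smul, Matrix.mulVec_mulVec, Matrix.nonsing_inv_mul _ hBu,
        Matrix.one_mulVec]
    rw [← Matrix.mulVec_mulVec, ← Matrix.mulVec_mulVec, h2, Matrix.dotProduct_mulVec,
      ← Matrix.transpose_nonsing_inv, Matrix.vecMul_transpose, h2]
    rw [Matrix.mulVec_smul, smul_dotProduct, dotProduct_smul, smul_eq_mul, smul_eq_mul,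
      ← mul_assoc, Real.mul_self_sqrt hk]
    simp
  rw [h1, ← Measure.map_map (by fun_prop) (measurable_gram_inv 0 0), map_inv_gaussMat hs,
    Measure.map_map (by fun_prop) (by fun_prop)]
  rfl

lemma pi_gaussianReal_eq_map (n : ℕ) {v : ℝ} (hv : 0 < v) :
    (Measure.pi fun _ : Fin n => gaussianReal 0 v.toNNReal)
      = (_root_.stdGaussian (Fin n)).map (fun g => √v • g) := by
  have h : ((gaussianReal 0 1).map (fun x => √v * x)) = gaussianReal 0 v.toNNReal := by
    rw [gaussianReal_map_const_mul]
    congr 1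
    · simp
    · ext; simp [Real.sq_sqrt hv.le, hv.le]
  have hp : IsProbabilityMeasure ((gaussianReal 0 1).map (fun x => √v * x)) := by
    rw [h]; infer_instance
  rw [← h, _root_.stdGaussian]
  exact (Measure.pi_map_pi (fun i => by fun_prop)).symm

lemma map_quadForm_scaled {n : ℕ} {v : ℝ} (hv : 0 < v) (Q : Matrix (Fin n) (Fin n) ℝ)
    (hs : Qᵀ = Q) (hi : Q * Q = Q) (k : ℕ) (ht : Q.trace = k) :
    (Measure.pi fun _ : Fin n => gaussianReal 0 v.toNNReal).map (fun w => w ⬝ᵥ Q *ᵥ w)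
      = (chiSq k).map (fun x => v * x) := by
  have hm : Measurable (fun w : Fin n → ℝ => w ⬝ᵥ Q *ᵥ w) := by
    simp only [dotProduct, Matrix.mulVec]; fun_prop
  rw [pi_gaussianReal_eq_map n hv, ← map_quadForm Q hs hi k ht,
    Measure.map_map hm (by fun_prop), Measure.map_map (by fun_prop) hm]
  congr 1
  ext w
  simp only [Function.comp, Matrix.mulVec_smul, smul_dotProduct, dotProduct_smul, smul_eq_mul]
  rw [← mul_assoc, Real.mul_self_sqrt hv.le]

/-- Mean-square integrability and variance of `bᵀ (Xᵀ X)⁻¹ b`. -/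
lemma variance_gram_quad {n s : ℕ} (hns : s + 3 < n) {S : Matrix (Fin s) (Fin s) ℝ}
    (hS : S.PosDef) {ρ : Measure (Fin s → ℝ)} (hρ : IsCenteredGaussianCov ρ S)
    (b : Fin s → ℝ) (hb : ∀ i, b i = 1 ∨ b i = -1) :
    MemLp (fun X : Fin n → Fin s → ℝ => b ⬝ᵥ ((Matrix.of X)ᵀ * Matrix.of X)⁻¹ *ᵥ b) 2
        (Measure.pi fun _ => ρ) ∧
      Var[fun X : Fin n → Fin s → ℝ => b ⬝ᵥ ((Matrix.of X)ᵀ * Matrix.of X)⁻¹ *ᵥ b;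
        Measure.pi fun _ => ρ]
      = (b ⬝ᵥ S⁻¹ *ᵥ b) ^ 2 * (2 / (((n : ℝ) - s - 1) ^ 2 * ((n : ℝ) - s - 3))) := by
  cases s with
  | zero =>
    have h0 : (fun X : Fin n → Fin 0 → ℝ => b ⬝ᵥ ((Matrix.of X)ᵀ * Matrix.of X)⁻¹ *ᵥ b) = 0 := by
      ext X; simp [dotProduct]
    rw [h0]
    refine ⟨MemLp.zero, ?_⟩
    simp [dotProduct]
  | succ s =>
    have hb0 : b ≠ 0 := by
      intro h
      rcases hb 0 with h1 | h1 <;> simp [h] at h1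
    have hmap := map_gram_quad (n := n) (by omega) hS hρ b hb0
    have hm := measurable_gram_quad (n := n) b
    set f := fun X : Fin n → Fin (s + 1) → ℝ => b ⬝ᵥ ((Matrix.of X)ᵀ * Matrix.of X)⁻¹ *ᵥ b
    have hL : MemLp (fun x => (b ⬝ᵥ S⁻¹ *ᵥ b) * (1 / x)) 2 (chiSq (n - s)) :=
      (memLp_inv_chiSq (by omega)).const_mul _
    constructor
    · have : MemLp id 2 ((Measure.pi fun _ : Fin n => ρ).map f) := by
        rw [hmap, memLp_map_measure_iff (by fun_prop) (by fun_prop)]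
        exact hL
      rwa [memLp_map_measure_iff (by fun_prop) hm.aemeasurable] at this
    · have h1 : Var[id; (Measure.pi fun _ : Fin n => ρ).map f] = Var[f; Measure.pi fun _ => ρ] := by
        rw [variance_map (by fun_prop) hm.aemeasurable]; rfl
      rw [← h1, hmap, variance_map (by fun_prop) (by fun_prop)]
      change Var[fun x => (b ⬝ᵥ S⁻¹ *ᵥ b) * (1 / x); chiSq (n - s)] = _
      rw [variance_const_mul, variance_inv_chiSq (by omega), Nat.cast_sub (by omega)]
      push_cast
      congr 3 <;> ring



/-! ### The variance of the scaling factor -/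

/-- Variance of the random scaling factor `M_n`. -/
theorem var_Mfac
    {Ω : Type*} [MeasurableSpace Ω] (P : Measure Ω) [IsProbabilityMeasure P]
    (n s : ℕ) (hns : s + 3 < n)
    (SigSS : Matrix (Fin s) (Fin s) ℝ) (hpd : SigSS.PosDef)
    (XS : Ω → Fin n → Fin s → ℝ) (hXmeas : Measurable XS)
    (hXlaw : HasIIDGaussianRows P XS SigSS)
    (σ2 : ℝ) (hσ2 : 0 < σ2)
    (W : Ω → Fin n → ℝ) (hWmeas : Measurable W)
    (hWlaw : Measure.map W P = Measure.pi (fun _ : Fin n => gaussianReal 0 σ2.toNNReal))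
    (hindep : IndepFun XS W P)
    (lam : ℝ) (hlam : 0 < lam) (b : Fin s → ℝ) (hb : ∀ i, b i = 1 ∨ b i = -1) :
    ∫ ω, (Mfac lam b (Matrix.of (XS ω)) (W ω) -
        ∫ ω', Mfac lam b (Matrix.of (XS ω')) (W ω') ∂P) ^ 2 ∂P =
      2 * ((n : ℝ) - s) * σ2 ^ 2 / (n : ℝ) ^ 4 +
        lam ^ 4 * (b ⬝ᵥ SigSS⁻¹.mulVec b) ^ 2 /
            (((n : ℝ) - s - 1) * ((n : ℝ) - s - 3)) *
          (1 / ((n : ℝ) - s) + ((n : ℝ) - s - 1) / ((n : ℝ) - s) -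
            ((n : ℝ) - s - 3) / ((n : ℝ) - s - 1)) := by
  obtain ⟨ρ, hρ, hX⟩ := hXlaw
  set μ := Measure.pi fun _ : Fin n => ρ with hμ
  set ν := Measure.pi fun _ : Fin n => gaussianReal 0 σ2.toNNReal with hν
  have : IsProbabilityMeasure μ := hX ▸ Measure.isProbabilityMeasure_map hXmeas.aemeasurable
  have hprod : MeasurePreserving (fun ω => (XS ω, W ω)) P (μ.prod ν) := by
    refine ⟨hXmeas.prodMk hWmeas, ?_⟩
    rw [(indepFun_iff_map_prod_eq_prod_map_map hXmeas.aemeasurable hWmeas.aemeasurable).1 hindep,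
      hX, hWlaw]
  set τ := (chiSq (n - s)).map (fun x => σ2 * x) with hτ
  have : IsProbabilityMeasure τ := Measure.isProbabilityMeasure_map (by fun_prop)
  have hres := (measurePreserving_resid_quad (by omega) μ (ae_isUnit_gram (by omega) hpd hρ) ν τ
    (fun Q h1 h2 h3 => map_quadForm_scaled hσ2 Q h1 h2 _ h3)).comp hprod
  set V : Ω → ℝ := fun ω => W ω ⬝ᵥ resid (Matrix.of (XS ω)) *ᵥ W ω with hV
  have hpair : MeasurePreserving (fun ω => (XS ω, V ω)) P (μ.prod τ) := hres
  have hVmp : MeasurePreserving V P τ := measurePreserving_snd.comp hpair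
  have hXmp : MeasurePreserving XS P μ := ⟨hXmeas, hX⟩
  have hind : IndepFun XS V P := by
    rw [indepFun_iff_map_prod_eq_prod_map_map hXmeas.aemeasurable hVmp.measurable.aemeasurable,
      hpair.map_eq, hX, hVmp.map_eq]
  obtain ⟨hUL, hUvar⟩ := variance_gram_quad hns hpd hρ b hb
  have hfm := measurable_gram_quad (n := n) b
  set f := fun X : Fin n → Fin s → ℝ => b ⬝ᵥ ((Matrix.of X)ᵀ * Matrix.of X)⁻¹ *ᵥ b with hf
  have hidL : MemLp id 2 τ := by
    rw [hτ, memLp_map_measure_iff (by fun_prop) (by fun_prop)]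
    exact (memLp_id_chiSq _).const_mul σ2
  have hidvar : Var[id; τ] = σ2 ^ 2 * (2 * ((n : ℝ) - s)) := by
    rw [hτ, variance_map (by fun_prop) (by fun_prop)]
    change Var[fun x => σ2 * id x; chiSq (n - s)] = _
    rw [variance_const_mul, variance_id_chiSq, Nat.cast_sub (by omega)]
  have hVL : MemLp V 2 P := hidL.comp_measurePreserving hVmp
  have hUL' : MemLp (f ∘ XS) 2 P := hUL.comp_measurePreserving hXmp
  have hVvar : Var[V; P] = σ2 ^ 2 * (2 * ((n : ℝ) - s)) := by
    rw [← hidvar, ← hVmp.map_eq, variance_map (by fun_prop) hVmp.measurable.aemeasurable]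
    rfl
  have hUvar' : Var[f ∘ XS; P]
      = (b ⬝ᵥ SigSS⁻¹ *ᵥ b) ^ 2 * (2 / (((n : ℝ) - s - 1) ^ 2 * ((n : ℝ) - s - 3))) := by
    rw [← hUvar, ← hμ, ← hX, variance_map hfm.aemeasurable hXmeas.aemeasurable]
  have hM : (fun ω => Mfac lam b (Matrix.of (XS ω)) (W ω))
      = fun ω => (fun ω => lam ^ 2 * (f ∘ XS) ω) ω + (fun ω => (1 / (n : ℝ) ^ 2) * V ω) ω := rfl
  have hMm : AEMeasurable (fun ω => Mfac lam b (Matrix.of (XS ω)) (W ω)) P := by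
    rw [hM]
    exact ((hfm.comp hXmeas).const_mul _ |>.add (hVmp.measurable.const_mul _)).aemeasurable
  rw [← variance_eq_integral hMm, hM,
    IndepFun.variance_fun_add (hUL'.const_mul _) (hVL.const_mul _)
      (hind.comp (hfm.const_mul _) (measurable_id.const_mul _)),
    variance_const_mul, variance_const_mul, hUvar', hVvar]
  have hn : (s : ℝ) + 3 < n := by exact_mod_cast hns
  have h0 : (n : ℝ) ≠ 0 := by have : (0 : ℝ) ≤ s := s.cast_nonneg; linarith
  have h1 : (n : ℝ) - s ≠ 0 := by linarith
  have h2 : (n : ℝ) - s - 1 ≠ 0 := by linarith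
  have h3 : (n : ℝ) - s - 3 ≠ 0 := by linarith
  field_simp
  ring
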